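/- Let (X,d) be a compact metric space and E ⊆ X a compact subset. For s ≥ 0 and ε > 0 define B_ε^s(E,d) = inf{ Σ_{n=1}^m (diam B_n)^s : {B_n}_{n=1}^m is a finite cover of E by open balls with diam(B_n) ≤ ε }, and dim*_H(E,d,ε) = sup{ s ≥ 0 : B_ε^s(E,d) ≥ 1 }. Then lim_{ε→0} dim*_H(E,d,ε) = lim_{ε→0} dim_H(E,d,ε), i.e. the limit of dim*_H(E,d,ε) as ε → 0 equals the Hausdorff dimension of (E,d). -/

import Mathlib

open Filter Set Topology
open scoped ENNReal

namespace MeanDim6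

/-- The `s`-dimensional Hausdorff pre-measure of `E ⊆ X` at scale `δ`
(countable covers; conventions `0^0 = 1` for nonempty sets, `diam(∅)^s = 0`). -/
noncomputable def hMeasure {X : Type*} [MetricSpace X] (E : Set X) (s δ : ℝ) : ℝ≥0∞ :=
  open scoped Classical in
  ⨅ (C : ℕ → Set X) (_ : E ⊆ ⋃ i, C i) (_ : ∀ i, Metric.diam (C i) < δ),
    ∑' i, if (C i).Nonempty then ENNReal.ofReal (Metric.diam (C i) ^ s) else 0

/-- `dim_H(E,d,δ) = sup { s ≥ 0 : H_δ^s(E,d) ≥ 1 }`. -/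
noncomputable def dimHScale {X : Type*} [MetricSpace X] (E : Set X) (δ : ℝ) : ℝ≥0∞ :=
  ⨆ (s : ℝ) (_ : 0 ≤ s) (_ : 1 ≤ hMeasure E s δ), ENNReal.ofReal s

/-- `B_ε^s(E,d)`: infimum of `Σ (diam B_n)^s` over finite covers of `E` by open balls
of diameter at most `ε`. -/
noncomputable def ballMeasure {X : Type*} [MetricSpace X] (E : Set X) (s ε : ℝ) : ℝ≥0∞ :=
  ⨅ (m : ℕ) (c : Fin m → X) (r : Fin m → ℝ)
    (_ : E ⊆ ⋃ i, Metric.ball (c i) (r i))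
    (_ : ∀ i, Metric.diam (Metric.ball (c i) (r i)) ≤ ε),
    ∑ i, ENNReal.ofReal (Metric.diam (Metric.ball (c i) (r i)) ^ s)

/-- `dim*_H(E,d,ε) = sup { s ≥ 0 : B_ε^s(E,d) ≥ 1 }`. -/
noncomputable def dimHStar {X : Type*} [MetricSpace X] (E : Set X) (ε : ℝ) : ℝ≥0∞ :=
  ⨆ (s : ℝ) (_ : 0 ≤ s) (_ : 1 ≤ ballMeasure E s ε), ENNReal.ofReal s

theorem hMeasure_le_ballMeasure {X : Type*} [MetricSpace X] (E : Set X) (s δ : ℝ) (hδ : 0 < δ) :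
    hMeasure E s δ ≤ ballMeasure E s (δ / 2) := by
  classical
  unfold ballMeasure
  refine le_iInf fun m => le_iInf fun c => le_iInf fun r => le_iInf fun h1 => le_iInf fun h2 => ?_
  let C : ℕ → Set X := fun i => if h : i < m then Metric.ball (c ⟨i, h⟩) (r ⟨i, h⟩) else ∅
  have hC1 : E ⊆ ⋃ i, C i := by
    intro x hx
    obtain ⟨i, hi⟩ := mem_iUnion.1 (h1 hx)
    refine mem_iUnion.2 ⟨i, ?_⟩
    simpa [C] using hi
  have hC2 : ∀ i, Metric.diam (C i) < δ := by
    intro i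
    by_cases h : i < m
    · have := h2 ⟨i, h⟩
      simp only [C, h, dif_pos]
      linarith
    · simp [C, h, hδ]
  unfold hMeasure
  refine iInf_le_of_le C (iInf_le_of_le hC1 (iInf_le_of_le hC2 ?_))
  rw [tsum_eq_sum (s := Finset.range m)]
  · rw [Finset.sum_range]
    refine Finset.sum_le_sum fun i _ => ?_
    simp only [C, i.2, dif_pos, Fin.eta]
    split_ifs
    · exact le_rfl
    · exact zero_le
  · intro i hi
    have : ¬ i < m := by simpa using hi
    simp [C, this]

theorem antitone_dimHStar {X : Type*} [MetricSpace X] (E : Set X) :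
    Antitone (fun ε : ℝ => dimHStar E ε) := by
  intro a b hab
  unfold dimHStar
  refine iSup_mono fun s => iSup_mono fun _ => iSup_mono' fun h => ⟨h.trans ?_, le_rfl⟩
  unfold ballMeasure
  refine iInf_mono fun m => iInf_mono fun c => iInf_mono fun r => iInf_mono fun _ =>
    iInf_mono' fun h => ⟨fun i => (h i).trans hab, le_rfl⟩

theorem antitone_dimHScale {X : Type*} [MetricSpace X] (E : Set X) :
    Antitone (fun ε : ℝ => dimHScale E ε) := by
  intro a b hab
  unfold dimHScale
  refine iSup_mono fun s => iSup_mono fun _ => iSup_mono' fun h => ⟨h.trans ?_, le_rfl⟩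
  unfold hMeasure
  refine iInf_mono fun C => iInf_mono fun _ =>
    iInf_mono' fun h => ⟨fun i => (h i).trans_le hab, le_rfl⟩

theorem exists_radius (s d δ η : ℝ) (hs : 0 < s) (hd : d < δ) (hη : 0 < η) :
    ∃ r, d < r ∧ r < δ ∧ (2 * r) ^ s ≤ (2 * d) ^ s + η := by
  have hc : ContinuousAt (fun r : ℝ => (2 * r) ^ s) d :=
    ((continuous_const.mul continuous_id).rpow_const (fun _ => Or.inr hs.le)).continuousAt
  have h1 : ∀ᶠ r in 𝓝[>] d, (2 * r) ^ s < (2 * d) ^ s + η :=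
    (hc.eventually_lt continuousAt_const (by simpa using hη)).filter_mono nhdsWithin_le_nhds
  have h2 : ∀ᶠ r in 𝓝[>] d, r ∈ Ioo d δ := Ioo_mem_nhdsGT hd
  obtain ⟨r, h, h'⟩ := (h1.and h2).exists
  exact ⟨r, h'.1, h'.2, h.le⟩

theorem key {X : Type*} [MetricSpace X] [CompactSpace X]
    (E : Set X) (hE : IsCompact E) (s t ε δ : ℝ) (ht : 0 ≤ t) (hts : t < s)
    (hδ : 0 < δ) (hδε : 2 * δ ≤ ε) (hδs : 2 ^ s * δ ^ (s - t) ≤ 1 / 2)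
    (hb : 1 ≤ ballMeasure E s ε) : 1 ≤ hMeasure E t δ := by
  classical
  have hs : 0 < s := ht.trans_lt hts
  have hne : E.Nonempty := by
    by_contra h
    rw [not_nonempty_iff_eq_empty] at h
    subst h
    have : ballMeasure (∅ : Set X) s ε ≤ 0 := by
      unfold ballMeasure
      refine iInf_le_of_le 0 (iInf_le_of_le (fun i => i.elim0) (iInf_le_of_le (fun i => i.elim0)
        (iInf_le_of_le (empty_subset _) (iInf_le_of_le (fun i => i.elim0) ?_))))
      simp
    exact absurd (hb.trans this) (by simp)
  obtain ⟨x0, hx0⟩ := hne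
  by_contra hlt
  rw [not_le] at hlt
  unfold hMeasure at hlt
  simp only [iInf_lt_iff] at hlt
  obtain ⟨C, hC1, hC2, hsum⟩ := hlt
  have hr := fun i : ℕ => exists_radius s (Metric.diam (C i)) δ ((1 / 2) ^ i * (1 / 4)) hs (hC2 i)
    (by positivity)
  choose r hr1 hr2 hr3 using hr
  have hr0 : ∀ i, 0 ≤ r i := fun i => Metric.diam_nonneg.trans (hr1 i).le
  have hc : ∀ i, ∃ c, C i ⊆ Metric.ball c (r i) := by
    intro i
    rcases (C i).eq_empty_or_nonempty with h | ⟨c, h⟩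
    · exact ⟨x0, by simp [h]⟩
    · refine ⟨c, fun y hy => ?_⟩
      exact (Metric.dist_le_diam_of_mem (Metric.isBounded_of_compactSpace) hy h).trans_lt (hr1 i)
  choose c hc using hc
  have hdiam : ∀ i, Metric.diam (Metric.ball (c i) (r i)) ≤ 2 * r i := fun i =>
    Metric.diam_ball (hr0 i)
  obtain ⟨F, hF⟩ := hE.elim_finite_subcover (fun i => Metric.ball (c i) (r i))
    (fun i => Metric.isOpen_ball) (hC1.trans (iUnion_mono hc))
  let e := F.equivFin.symm
  have hcov : E ⊆ ⋃ j : Fin F.card, Metric.ball (c (e j)) (r (e j)) := by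
    intro x hx
    obtain ⟨i, hi, hxi⟩ := mem_iUnion₂.1 (hF hx)
    refine mem_iUnion.2 ⟨e.symm ⟨i, hi⟩, ?_⟩
    simpa using hxi
  have hle : ballMeasure E s ε ≤
      ∑ j : Fin F.card, ENNReal.ofReal (Metric.diam (Metric.ball (c (e j)) (r (e j))) ^ s) := by
    unfold ballMeasure
    refine iInf_le_of_le F.card (iInf_le_of_le (fun j => c (e j)) (iInf_le_of_le (fun j => r (e j))
        (iInf_le_of_le hcov (iInf_le _ (fun j => (hdiam _).trans ?_)))))
    have := hr2 (e j)
    linarith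
  have hsumF : ∑ j : Fin F.card, ENNReal.ofReal (Metric.diam (Metric.ball (c (e j)) (r (e j))) ^ s)
      = ∑ i ∈ F, ENNReal.ofReal (Metric.diam (Metric.ball (c i) (r i)) ^ s) := by
    rw [← Finset.sum_coe_sort F]
    exact Equiv.sum_comp e
      (fun i : F => ENNReal.ofReal (Metric.diam (Metric.ball (c i) (r i)) ^ s))
  set g : ℕ → ℝ≥0∞ := fun i =>
    if (C i).Nonempty then ENNReal.ofReal (Metric.diam (C i) ^ t) else 0 with hg
  have hterm : ∀ i, ENNReal.ofReal (Metric.diam (Metric.ball (c i) (r i)) ^ s) ≤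
      ENNReal.ofReal (1 / 2) * g i + ENNReal.ofReal ((1 / 2) ^ i * (1 / 4)) := by
    intro i
    have h1 : Metric.diam (Metric.ball (c i) (r i)) ^ s ≤
        (2 * Metric.diam (C i)) ^ s + (1 / 2) ^ i * (1 / 4) :=
      (Real.rpow_le_rpow Metric.diam_nonneg (hdiam i) hs.le).trans (hr3 i)
    refine (ENNReal.ofReal_le_ofReal h1).trans ?_
    rw [ENNReal.ofReal_add (by positivity) (by positivity)]
    gcongr
    rcases (C i).eq_empty_or_nonempty with h | h
    · simp [h, Real.zero_rpow hs.ne']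
    · simp only [hg, h, if_true]
      rw [← ENNReal.ofReal_mul (by norm_num)]
      apply ENNReal.ofReal_le_ofReal
      rw [Real.mul_rpow (by norm_num) Metric.diam_nonneg]
      have hd0 : 0 ≤ Metric.diam (C i) := Metric.diam_nonneg
      have h3 : Metric.diam (C i) ^ s = Metric.diam (C i) ^ (s - t) * Metric.diam (C i) ^ t := by
        rw [← Real.rpow_add_of_nonneg hd0 (by linarith) ht]
        congr 1; ring
      rw [h3, ← mul_assoc]
      refine mul_le_mul_of_nonneg_right (le_trans ?_ hδs) (by positivity)
      refine mul_le_mul_of_nonneg_left ?_ (by positivity)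
      exact Real.rpow_le_rpow hd0 (hC2 i).le (by linarith)
  have hgeo : ∑' i : ℕ, ENNReal.ofReal ((1 / 2) ^ i * (1 / 4)) = ENNReal.ofReal (1 / 2) := by
    rw [← ENNReal.ofReal_tsum_of_nonneg (fun i => by positivity)
      (summable_geometric_two.mul_right _), tsum_mul_right, tsum_geometric_two]
    norm_num
  have hfin : ballMeasure E s ε < 1 := by
    calc ballMeasure E s ε ≤ ∑ i ∈ F, ENNReal.ofReal (Metric.diam (Metric.ball (c i) (r i)) ^ s) :=
          hle.trans hsumF.le
      _ ≤ ∑ i ∈ F, (ENNReal.ofReal (1 / 2) * g i + ENNReal.ofReal ((1 / 2) ^ i * (1 / 4))) :=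
          Finset.sum_le_sum fun i _ => hterm i
      _ ≤ ∑' i, (ENNReal.ofReal (1 / 2) * g i + ENNReal.ofReal ((1 / 2) ^ i * (1 / 4))) :=
          ENNReal.sum_le_tsum F
      _ = ENNReal.ofReal (1 / 2) * (∑' i, g i) + ENNReal.ofReal (1 / 2) := by
          rw [ENNReal.tsum_add, ENNReal.tsum_mul_left, hgeo]
      _ < ENNReal.ofReal (1 / 2) * 1 + ENNReal.ofReal (1 / 2) := by
          refine ENNReal.add_lt_add_right ENNReal.ofReal_ne_top ?_
          exact ENNReal.mul_lt_mul_right (by simp) ENNReal.ofReal_ne_top hsum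
      _ = 1 := by
          rw [mul_one, ← ENNReal.ofReal_add (by norm_num) (by norm_num)]
          norm_num
  exact absurd hb (not_le.2 hfin)

theorem dimHStar_le {X : Type*} [MetricSpace X] [CompactSpace X]
    (E : Set X) (hE : IsCompact E) (ε : ℝ) (hε : 0 < ε) :
    dimHStar E ε ≤ sSup ((fun δ : ℝ => dimHScale E δ) '' Ioi 0) := by
  unfold dimHStar
  refine iSup_le fun s => iSup_le fun hs0 => iSup_le fun hb => ?_
  refine le_of_forall_lt_imp_le_of_dense fun a ha => ?_
  have hat : a ≠ ∞ := ha.ne_top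
  have hts : a.toReal < s := (ENNReal.lt_ofReal_iff_toReal_lt hat).1 ha
  have hlim : Tendsto (fun δ : ℝ => 2 ^ s * δ ^ (s - a.toReal)) (𝓝[>] 0) (𝓝 0) := by
    have hc : ContinuousAt (fun δ : ℝ => 2 ^ s * δ ^ (s - a.toReal)) 0 :=
      (continuous_const.mul (continuous_id.rpow_const
        (fun _ => Or.inr (by linarith)))).continuousAt
    have := hc.tendsto.mono_left (nhdsWithin_le_nhds (s := Ioi 0))
    simpa [Real.zero_rpow (sub_pos.2 hts).ne'] using this
  have h1 := hlim.eventually_le_const (show (0 : ℝ) < 1 / 2 by norm_num)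
  have h2 : ∀ᶠ δ in 𝓝[>] (0 : ℝ), δ ∈ Ioo 0 (ε / 2) := Ioo_mem_nhdsGT (by positivity)
  obtain ⟨δ, hδ1, hδ2⟩ := (h1.and h2).exists
  have hk := key E hE s a.toReal ε δ ENNReal.toReal_nonneg hts hδ2.1 (by linarith [hδ2.2]) hδ1 hb
  refine le_trans ?_ (le_sSup (mem_image_of_mem _ (show δ ∈ Ioi 0 from hδ2.1)))
  refine le_iSup_of_le a.toReal (le_iSup_of_le ENNReal.toReal_nonneg (le_iSup_of_le hk ?_))
  rw [ENNReal.ofReal_toReal hat]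

/-- `lim_{ε→0} dim*_H(E,d,ε) = lim_{ε→0} dim_H(E,d,ε)`:
both limits exist and coincide. -/
theorem dimHStar_lim_eq_dimH_lim {X : Type*} [MetricSpace X] [CompactSpace X]
    (E : Set X) (hE : IsCompact E) :
    ∃ l : ℝ≥0∞,
      Tendsto (fun ε : ℝ => dimHStar E ε) (𝓝[>] (0 : ℝ)) (𝓝 l) ∧
      Tendsto (fun ε : ℝ => dimHScale E ε) (𝓝[>] (0 : ℝ)) (𝓝 l) := by
  refine ⟨sSup ((fun δ : ℝ => dimHScale E δ) '' Ioi 0), ?_,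
    (antitone_dimHScale E).tendsto_nhdsGT 0⟩
  have h := (antitone_dimHStar E).tendsto_nhdsGT 0
  convert h using 2
  apply le_antisymm
  · refine sSup_le ?_
    rintro _ ⟨δ, hδ, rfl⟩
    have hδ' : 0 < δ := hδ
    refine le_trans ?_ (le_sSup (mem_image_of_mem _ (show δ / 2 ∈ Ioi (0 : ℝ) from half_pos hδ')))
    exact iSup_mono fun s => iSup_mono fun _ => iSup_mono' fun h =>
      ⟨h.trans (hMeasure_le_ballMeasure E s δ hδ'), le_rfl⟩
  · refine sSup_le ?_
    rintro _ ⟨ε, hε, rfl⟩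
    exact dimHStar_le E hE ε hε

end MeanDim6
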